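/- Let θ ∈ ℝ, C > 0, and let {a_j} = {(a_j', a_{jn})} be a sequence in D_P with a_j → (0', e^{iθ}) as j → ∞ and P(a_j') ≤ C (1 − |a_{jn}|² − P(a_j')) for all j. Then liminf_{j→∞} σ_{D_P}(a_j) > 0. -/

import Mathlib

open Complex Metric Set

noncomputable section

/-- `ℂⁿ` with `n = N + 1`, carrying the Euclidean norm; points are written `z = (z', z_n)`
with `z' ∈ ℂᴺ` the first `N` coordinates and `z_n` the last coordinate. -/
abbrev CSp (N : ℕ) : Type := EuclideanSpace ℂ (Fin (N + 1))

variable {N : ℕ}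

/-- The last coordinate `z_n` of `z = (z', z_n)`. -/
def lastC (z : CSp N) : ℂ := z (Fin.last N)

/-- The first `N` coordinates `z'` of `z = (z', z_n)`. -/
def initC (z : CSp N) : Fin N → ℂ := fun j => z j.castSucc

/-- The point `(z', z_n) ∈ ℂⁿ`. -/
def mkPt (z' : Fin N → ℂ) (zn : ℂ) : CSp N :=
  WithLp.toLp 2 (Fin.snoc (α := fun _ => ℂ) z' zn)

/-- The weight `wt(K) = Σ_j k_j / (2 m_j)` of a multi-index `K` with respect to
`Λ = (1/m₁, …, 1/m_N)`. -/
def wt (m : Fin N → ℕ) (K : Fin N → ℕ) : ℝ := ∑ j, (K j : ℝ) / (2 * m j)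

/-- `P` is a real-valued weighted homogeneous polynomial of the form
`P(z') = Σ_{wt(K)=wt(L)=1/2} a_{KL} z'^K conj(z')^L` with `a_{KL} = conj (a_{LK})`. -/
def IsWHP (m : Fin N → ℕ) (P : (Fin N → ℂ) → ℝ) : Prop :=
  ∃ a : (Fin N → ℕ) → (Fin N → ℕ) → ℂ,
    {q : (Fin N → ℕ) × (Fin N → ℕ) | a q.1 q.2 ≠ 0}.Finite ∧
    (∀ K L, a K L = starRingEnd ℂ (a L K)) ∧
    (∀ K L, a K L ≠ 0 → wt m K = 1 / 2 ∧ wt m L = 1 / 2) ∧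
    (∀ z' : Fin N → ℂ, (P z' : ℂ) =
      ∑ᶠ K, ∑ᶠ L, a K L * (∏ j, z' j ^ K j) * ∏ j, starRingEnd ℂ (z' j) ^ L j)

/-- The general ellipsoid `D_P = {(z',z_n) : |z_n|² + P(z') < 1}`. -/
def DP (P : (Fin N → ℂ) → ℝ) : Set (CSp N) :=
  {z | ‖lastC z‖ ^ 2 + P (initC z) < 1}

/-- The squeezing function `σ_Ω(p)`: the supremum of all `r > 0` such that some holomorphic
embedding `f : Ω → 𝔹ⁿ` with `f p = 0` satisfies `B(0;r) ⊆ f(Ω)`. -/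
def sqf {n : ℕ} (Ω : Set (EuclideanSpace ℂ (Fin n))) (p : EuclideanSpace ℂ (Fin n)) : ℝ :=
  sSup {r : ℝ | 0 < r ∧ ∃ f : EuclideanSpace ℂ (Fin n) → EuclideanSpace ℂ (Fin n),
    DifferentiableOn ℂ f Ω ∧ InjOn f Ω ∧ f '' Ω ⊆ ball 0 1 ∧ f p = 0 ∧ ball 0 r ⊆ f '' Ω}

/-!
For `|a| < 1` the disc automorphism of the `z_n`-coordinate lifts to an automorphism of `D_P`, whose
`z'`-components are multiplied by powers of a square root of the derivative. It multiplies both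
`P(z')` and `1 - |z_n|² - P(z')` by the modulus of that derivative, so it preserves the region
`P(z') ≤ C (1 - |z_n|² - P(z'))`. A point `p` of this region is thereby moved into the slice
`z_n = 0` of the region, which is a compact subset of `D_P`. Hence the image of `p` is the centre of
a ball in `D_P` whose radius does not depend on `p`; as `D_P` is bounded, rescaling gives a uniform
lower bound for the squeezing function.
-/

section Dilation

open Filter Topology

variable {ι : Type*}

/-- The complex anisotropic dilation `z_j ↦ e^{w_j l} z_j`. The scale `e^l` enters through its
logarithm `l`, so that its powers `(e^l)^{w_j}` involve no choice of branch. -/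
def weightedDilation (w : ι → ℝ) (l : ℂ) (z : ι → ℂ) : ι → ℂ := fun j => exp (w j * l) * z j

/-- Homogeneity of bidegree `(1, 1)` in `e^l` and its conjugate under the dilations with weights
`w`. For `w_j = 1 / m_j` this is what the condition `wt(K) = wt(L) = 1/2` on the monomials of a
polynomial amounts to. -/
def IsWeightedHomogeneous (w : ι → ℝ) (P : (ι → ℂ) → ℝ) : Prop :=
  ∀ l z, P (weightedDilation w l z) = ‖exp l‖ ^ 2 * P z

theorem norm_weightedDilation_apply (w : ι → ℝ) (l : ℂ) (z : ι → ℂ) (j : ι) :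
    ‖weightedDilation w l z j‖ = Real.exp (w j * l.re) * ‖z j‖ := by
  simp [weightedDilation, norm_exp]

theorem weightedDilation_weightedDilation (w : ι → ℝ) (k l : ℂ) (z : ι → ℂ) :
    weightedDilation w k (weightedDilation w l z) = weightedDilation w (k + l) z := by
  funext j
  simp only [weightedDilation, mul_add, exp_add, mul_assoc]

theorem weightedDilation_zero_left (w : ι → ℝ) (z : ι → ℂ) : weightedDilation w 0 z = z := by
  funext j
  simp [weightedDilation]

theorem weightedDilation_zero_right (w : ι → ℝ) (l : ℂ) : weightedDilation w l 0 = 0 := by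
  funext j
  simp [weightedDilation]

theorem prod_weightedDilation_pow [Fintype ι] (w : ι → ℝ) (l : ℂ) (z : ι → ℂ) (K : ι → ℕ) :
    ∏ j, weightedDilation w l z j ^ K j = exp ((∑ j, K j * w j : ℝ) * l) * ∏ j, z j ^ K j := by
  simp only [weightedDilation, mul_pow, Finset.prod_mul_distrib, ← exp_nat_mul, ← exp_sum]
  push_cast
  simp only [Finset.sum_mul, mul_assoc]

theorem IsWeightedHomogeneous.map_zero {w : ι → ℝ} {P : (ι → ℂ) → ℝ}
    (hP : IsWeightedHomogeneous w P) : P 0 = 0 := by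
  have h := hP (Real.log 2 : ℝ) 0
  rw [weightedDilation_zero_right, ← ofReal_exp, Real.exp_log two_pos] at h
  norm_num at h
  linarith

theorem IsWeightedHomogeneous.nonneg {w : ι → ℝ} {P : (ι → ℂ) → ℝ}
    (hP : IsWeightedHomogeneous w P) (hpos : ∀ z, z ≠ 0 → 0 < P z) (z : ι → ℂ) : 0 ≤ P z := by
  rcases eq_or_ne z 0 with rfl | hz
  · exact hP.map_zero.ge
  · exact (hpos z hz).le

theorem exists_norm_weightedDilation_eq_one [Fintype ι] {w : ι → ℝ} (hw : ∀ j, 0 < w j)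
    {z : ι → ℂ} (hz : z ≠ 0) : ∃ t : ℝ, ‖weightedDilation w t z‖ = 1 := by
  have hcont : Continuous fun t : ℝ => ‖weightedDilation w t z‖ := by
    unfold weightedDilation
    fun_prop
  refine mem_range_of_exists_le_of_exists_ge hcont ?_ ?_
  · have hlim : Tendsto (fun t : ℝ => weightedDilation w t z) atBot (𝓝 0) := by
      refine tendsto_pi_nhds.2 fun j => tendsto_zero_iff_norm_tendsto_zero.2 ?_
      simp only [norm_weightedDilation_apply, ofReal_re]
      simpa using (Real.tendsto_exp_atBot.comp
        (tendsto_id.const_mul_atBot (hw j))).mul_const ‖z j‖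
    exact ((tendsto_zero_iff_norm_tendsto_zero.1 hlim).eventually_le_const one_pos).exists
  · obtain ⟨j, hj⟩ := Function.ne_iff.1 hz
    have hlim : Tendsto (fun t : ℝ => ‖weightedDilation w t z j‖) atTop atTop := by
      simp only [norm_weightedDilation_apply, ofReal_re]
      exact (Real.tendsto_exp_atTop.comp
        (tendsto_id.const_mul_atTop (hw j))).atTop_mul_const (norm_pos_iff.2 hj)
    obtain ⟨t, ht⟩ := (hlim.eventually_ge_atTop 1).exists
    exact ⟨t, ht.trans (norm_le_pi_norm _ j)⟩

theorem IsWeightedHomogeneous.isBounded_sublevel [Finite ι] {w : ι → ℝ} {P : (ι → ℂ) → ℝ}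
    (hP : IsWeightedHomogeneous w P) (hw : ∀ j, 0 < w j) (hcont : Continuous P)
    (hpos : ∀ z, z ≠ 0 → 0 < P z) : Bornology.IsBounded {z | P z < 1} := by
  cases nonempty_fintype ι
  obtain ⟨c, hc, hmin⟩ : ∃ c, 0 < c ∧ ∀ z ∈ sphere (0 : ι → ℂ) 1, c ≤ P z :=
    (isCompact_sphere 0 1).exists_forall_le' hcont.continuousOn fun z hz =>
      hpos z (ne_of_mem_sphere hz one_ne_zero)
  suffices hsub : {z | P z < 1} ⊆
      univ.pi fun j => closedBall (0 : ℂ) (Real.exp (-(w j * (Real.log c / 2)))) from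
    (Bornology.IsBounded.pi fun _ => isBounded_closedBall).subset hsub
  intro z hz j _
  rcases eq_or_ne z 0 with rfl | hz0
  · simpa using (Real.exp_pos _).le
  obtain ⟨t, ht⟩ := exists_norm_weightedDilation_eq_one hw hz0
  have ht_ge : Real.log c / 2 ≤ t := by
    have hlt : c < Real.exp (2 * t) := calc
      c ≤ P (weightedDilation w t z) := hmin _ (by simpa using ht)
      _ = Real.exp (2 * t) * P z := by
        rw [hP, norm_exp, ofReal_re, ← Real.exp_nat_mul, Nat.cast_two]
      _ < Real.exp (2 * t) := mul_lt_of_lt_one_right (Real.exp_pos _) hz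
    linarith [(Real.log_lt_iff_lt_exp hc).2 hlt]
  have hcoord : Real.exp (w j * t) * ‖z j‖ ≤ 1 := by
    rw [← ht, ← ofReal_re t, ← norm_weightedDilation_apply, ofReal_re]
    exact norm_le_pi_norm _ j
  rw [mem_closedBall_zero_iff]
  calc ‖z j‖ ≤ Real.exp (-(w j * t)) := by
        rwa [Real.exp_neg, ← one_div, le_div_iff₀' (Real.exp_pos _)]
    _ ≤ Real.exp (-(w j * (Real.log c / 2))) := by
        gcongr
        exact (hw j).le

end Dilation

section Polynomial

open ComplexConjugate

variable {m : Fin N → ℕ} {P : (Fin N → ℂ) → ℝ}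

theorem sum_mul_inv_eq_one_of_wt_eq_half {K : Fin N → ℕ} (hK : wt m K = 1 / 2) :
    ∑ j, (K j : ℝ) * (m j : ℝ)⁻¹ = 1 := by
  have hwt : wt m K = (∑ j, (K j : ℝ) * (m j : ℝ)⁻¹) / 2 := by
    rw [wt, Finset.sum_div]
    exact Finset.sum_congr rfl fun j _ => by ring
  linarith

theorem IsWHP.exists_eq_sum (hP : IsWHP m P) :
    ∃ (a : (Fin N → ℕ) → (Fin N → ℕ) → ℂ) (S : Finset ((Fin N → ℕ) × (Fin N → ℕ))),
      (∀ q ∈ S, wt m q.1 = 1 / 2 ∧ wt m q.2 = 1 / 2) ∧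
      ∀ z, (P z : ℂ) = ∑ q ∈ S, a q.1 q.2 * (∏ j, z j ^ q.1 j) * ∏ j, conj (z j) ^ q.2 j := by
  obtain ⟨a, hfin, -, hwt, hsum⟩ := hP
  refine ⟨a, hfin.toFinset, fun q hq => hwt _ _ (hfin.mem_toFinset.1 hq), fun z => ?_⟩
  let monomial (q : (Fin N → ℕ) × (Fin N → ℕ)) : ℂ :=
    a q.1 q.2 * (∏ j, z j ^ q.1 j) * ∏ j, conj (z j) ^ q.2 j
  have hsupp : Function.support monomial ⊆ hfin.toFinset := fun q hq =>
    hfin.mem_toFinset.2 (left_ne_zero_of_mul (left_ne_zero_of_mul hq))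
  rw [hsum z, ← finsum_eq_sum_of_support_subset monomial hsupp,
    finsum_curry monomial (hfin.toFinset.finite_toSet.subset hsupp)]

theorem IsWHP.continuous (hP : IsWHP m P) : Continuous P := by
  obtain ⟨a, S, -, hsum⟩ := hP.exists_eq_sum
  refine isometry_ofReal.isEmbedding.continuous_iff.2 ?_
  simp only [Function.comp_def, hsum]
  fun_prop

theorem IsWHP.isWeightedHomogeneous (hP : IsWHP m P) :
    IsWeightedHomogeneous (fun j => (m j : ℝ)⁻¹) P := by
  obtain ⟨a, S, hwt, hsum⟩ := hP.exists_eq_sum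
  intro l z
  rw [← ofReal_inj]
  push_cast
  rw [hsum, hsum, ← mul_conj', Finset.mul_sum]
  refine Finset.sum_congr rfl fun q hq => ?_
  have hhol := prod_weightedDilation_pow (fun j => (m j : ℝ)⁻¹) l z q.1
  have hanti := congrArg conj (prod_weightedDilation_pow (fun j => (m j : ℝ)⁻¹) l z q.2)
  rw [sum_mul_inv_eq_one_of_wt_eq_half (hwt q hq).1, ofReal_one, one_mul] at hhol
  rw [sum_mul_inv_eq_one_of_wt_eq_half (hwt q hq).2, ofReal_one, one_mul] at hanti
  simp only [map_mul, map_prod, map_pow] at hanti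
  rw [hhol, hanti]
  ring

end Polynomial

section Disc

open ComplexConjugate

variable {a z : ℂ}

/-- The automorphism `z ↦ (z - a) / (1 - conj a * z)` of the unit disc, which sends `a` to `0`. -/
def discAut (a z : ℂ) : ℂ := (z - a) / (1 - conj a * z)

/-- A holomorphic logarithm of `√(1 - |a|²) / (1 - conj a * z)`, that is, half the logarithm of the
derivative of `discAut a`. -/
def logSqrtDerivDiscAut (a z : ℂ) : ℂ :=
  ((Real.log (1 - ‖a‖ ^ 2) / 2 : ℝ) : ℂ) - log (1 - conj a * z)

theorem one_sub_conj_mul_mem_slitPlane (ha : ‖a‖ < 1) (hz : ‖z‖ < 1) :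
    1 - conj a * z ∈ slitPlane := by
  refine mem_slitPlane_of_norm_lt_one (z := -(conj a * z)) ?_
  rw [norm_neg, norm_mul, norm_conj]
  exact mul_lt_one_of_nonneg_of_lt_one_left (norm_nonneg a) ha hz.le

theorem one_sub_conj_mul_ne_zero (ha : ‖a‖ < 1) (hz : ‖z‖ < 1) : 1 - conj a * z ≠ 0 :=
  slitPlane_ne_zero (one_sub_conj_mul_mem_slitPlane ha hz)

theorem differentiableAt_discAut (ha : ‖a‖ < 1) (hz : ‖z‖ < 1) :
    DifferentiableAt ℂ (discAut a) z := by
  have hden := one_sub_conj_mul_ne_zero ha hz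
  unfold discAut
  fun_prop (disch := assumption)

theorem differentiableAt_logSqrtDerivDiscAut (ha : ‖a‖ < 1) (hz : ‖z‖ < 1) :
    DifferentiableAt ℂ (logSqrtDerivDiscAut a) z := by
  have hslit := one_sub_conj_mul_mem_slitPlane ha hz
  unfold logSqrtDerivDiscAut
  fun_prop (disch := assumption)

theorem one_sub_norm_sq_pos (ha : ‖a‖ < 1) : 0 < 1 - ‖a‖ ^ 2 := by
  have := pow_lt_one₀ (norm_nonneg a) ha two_ne_zero
  linarith

theorem norm_exp_logSqrtDerivDiscAut_sq (ha : ‖a‖ < 1) (hz : ‖z‖ < 1) :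
    ‖exp (logSqrtDerivDiscAut a z)‖ ^ 2 = (1 - ‖a‖ ^ 2) / ‖1 - conj a * z‖ ^ 2 := by
  rw [logSqrtDerivDiscAut, exp_sub, exp_log (one_sub_conj_mul_ne_zero ha hz), norm_div, div_pow,
    norm_exp, ofReal_re, ← Real.exp_nat_mul, Nat.cast_two, mul_div_cancel₀ _ two_ne_zero,
    Real.exp_log (one_sub_norm_sq_pos ha)]

theorem one_sub_norm_discAut_sq (ha : ‖a‖ < 1) (hz : ‖z‖ < 1) :
    1 - ‖discAut a z‖ ^ 2 = ‖exp (logSqrtDerivDiscAut a z)‖ ^ 2 * (1 - ‖z‖ ^ 2) := by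
  have hden : ‖1 - conj a * z‖ ^ 2 ≠ 0 :=
    pow_ne_zero _ (norm_ne_zero_iff.2 (one_sub_conj_mul_ne_zero ha hz))
  have hnum : ‖1 - conj a * z‖ ^ 2 - ‖z - a‖ ^ 2 = (1 - ‖a‖ ^ 2) * (1 - ‖z‖ ^ 2) := by
    simp only [Complex.sq_norm, normSq_apply, sub_re, sub_im, mul_re, mul_im, one_re, one_im,
      conj_re, conj_im]
    ring
  rw [norm_exp_logSqrtDerivDiscAut_sq ha hz, discAut, norm_div, div_pow, div_mul_eq_mul_div,
    ← hnum, sub_div, div_self hden]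

theorem norm_discAut_lt_one (ha : ‖a‖ < 1) (hz : ‖z‖ < 1) : ‖discAut a z‖ < 1 := by
  have hpos : 0 < 1 - ‖discAut a z‖ ^ 2 := by
    rw [one_sub_norm_discAut_sq ha hz]
    have := one_sub_norm_sq_pos hz
    have := norm_pos_iff.2 (exp_ne_zero (logSqrtDerivDiscAut a z))
    positivity
  exact (sq_lt_one_iff₀ (norm_nonneg _)).1 (by linarith)

theorem one_add_conj_mul_discAut (ha : ‖a‖ < 1) (hz : ‖z‖ < 1) :
    1 - conj (-a) * discAut a z = ((1 - ‖a‖ ^ 2 : ℝ) : ℂ) * (1 - conj a * z)⁻¹ := by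
  have hden := one_sub_conj_mul_ne_zero ha hz
  rw [discAut]
  push_cast
  rw [← mul_conj', map_neg]
  field_simp
  ring

theorem discAut_neg_discAut (ha : ‖a‖ < 1) (hz : ‖z‖ < 1) : discAut (-a) (discAut a z) = z := by
  have hden := one_sub_conj_mul_ne_zero ha hz
  have hpos : ((1 - ‖a‖ ^ 2 : ℝ) : ℂ) ≠ 0 := ofReal_ne_zero.2 (one_sub_norm_sq_pos ha).ne'
  rw [discAut, one_add_conj_mul_discAut ha hz, div_eq_iff (mul_ne_zero hpos (inv_ne_zero hden)),
    discAut]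
  push_cast
  rw [← mul_conj']
  linear_combination -a * mul_inv_cancel₀ hden

theorem logSqrtDerivDiscAut_neg_discAut (ha : ‖a‖ < 1) (hz : ‖z‖ < 1) :
    logSqrtDerivDiscAut (-a) (discAut a z) = -logSqrtDerivDiscAut a z := by
  have hslit := one_sub_conj_mul_mem_slitPlane ha hz
  rw [logSqrtDerivDiscAut, one_add_conj_mul_discAut ha hz,
    log_ofReal_mul (one_sub_norm_sq_pos ha) (inv_ne_zero (slitPlane_ne_zero hslit)),
    log_inv _ (mem_slitPlane_iff_arg.1 hslit).1, logSqrtDerivDiscAut, norm_neg]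
  push_cast
  ring

end Disc

section Coordinates

theorem initC_mkPt (z' : Fin N → ℂ) (zn : ℂ) : initC (mkPt z' zn) = z' := by
  funext j
  simp [initC, mkPt]

theorem lastC_mkPt (z' : Fin N → ℂ) (zn : ℂ) : lastC (mkPt z' zn) = zn := by
  simp [lastC, mkPt]

theorem mkPt_initC_lastC (z : CSp N) : mkPt (initC z) (lastC z) = z := by
  ext j
  refine Fin.lastCases ?_ (fun i => ?_) j
  · simp [mkPt, lastC]
  · simp [mkPt, initC]

theorem differentiable_lastC : Differentiable ℂ (lastC : CSp N → ℂ) := by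
  unfold lastC
  fun_prop

theorem differentiable_initC : Differentiable ℂ (initC : CSp N → Fin N → ℂ) := by
  unfold initC
  fun_prop

theorem differentiableAt_mkPt {E : Type*} [NormedAddCommGroup E] [NormedSpace ℂ E]
    {f : E → Fin N → ℂ} {g : E → ℂ} {x : E} (hf : DifferentiableAt ℂ f x)
    (hg : DifferentiableAt ℂ g x) : DifferentiableAt ℂ (fun y => mkPt (f y) (g y)) x := by
  refine differentiableAt_euclidean.2 fun j => ?_
  refine Fin.lastCases ?_ (fun i => ?_) j
  · simpa [mkPt] using hg
  · simpa [mkPt] using differentiableAt_pi.1 hf i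

end Coordinates

section Ellipsoid

variable {P : (Fin N → ℂ) → ℝ} {w : Fin N → ℝ} {C : ℝ} {a : ℂ} {z : CSp N}

theorem mem_DP_iff : z ∈ DP P ↔ 0 < 1 - ‖lastC z‖ ^ 2 - P (initC z) := by
  rw [DP, mem_ofPred_eq, sub_sub, sub_pos]

theorem norm_lastC_lt_one (hP : ∀ z', 0 ≤ P z') (hz : z ∈ DP P) : ‖lastC z‖ < 1 := by
  have hdef := mem_DP_iff.1 hz
  exact (sq_lt_one_iff₀ (norm_nonneg _)).1 (by linarith [hP (initC z)])

theorem isOpen_DP (hP : Continuous P) : IsOpen (DP P) :=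
  isOpen_lt ((differentiable_lastC.continuous.norm.pow 2).add
    (hP.comp differentiable_initC.continuous)) continuous_const

theorem isBounded_DP (hP : ∀ z', 0 ≤ P z') (hbdd : Bornology.IsBounded {z' | P z' < 1}) :
    Bornology.IsBounded (DP P) := by
  obtain ⟨M, hM⟩ := hbdd.subset_closedBall 0
  suffices hsub : DP P ⊆ WithLp.ofLp ⁻¹' closedBall 0 (max M 1) from
    ((PiLp.antilipschitzWith_ofLp 2 _).isBounded_preimage isBounded_closedBall).subset hsub
  intro z hz
  rw [mem_preimage, mem_closedBall_zero_iff, pi_norm_le_iff_of_nonneg (by positivity)]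
  refine Fin.lastCases ?_ (fun i => ?_)
  · exact (norm_lastC_lt_one hP hz).le.trans (le_max_right _ _)
  · have hinit : initC z ∈ {z' | P z' < 1} := by
      have hdef := mem_DP_iff.1 hz
      exact (by linarith [sq_nonneg ‖lastC z‖] : P (initC z) < 1)
    exact ((norm_le_pi_norm (initC z) i).trans (mem_closedBall_zero_iff.1 (hM hinit))).trans
      (le_max_left _ _)

/-- The automorphism of `DP P`, for `P` homogeneous with weights `w`, that covers the disc
automorphism `discAut a` of the `z_n`-coordinate. -/
def ellipsoidAut (w : Fin N → ℝ) (a : ℂ) (z : CSp N) : CSp N :=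
  mkPt (weightedDilation w (logSqrtDerivDiscAut a (lastC z)) (initC z)) (discAut a (lastC z))

theorem initC_ellipsoidAut (w : Fin N → ℝ) (a : ℂ) (z : CSp N) :
    initC (ellipsoidAut w a z) =
      weightedDilation w (logSqrtDerivDiscAut a (lastC z)) (initC z) :=
  initC_mkPt _ _

theorem lastC_ellipsoidAut (w : Fin N → ℝ) (a : ℂ) (z : CSp N) :
    lastC (ellipsoidAut w a z) = discAut a (lastC z) :=
  lastC_mkPt _ _

theorem one_sub_ellipsoidAut (hP : IsWeightedHomogeneous w P) (ha : ‖a‖ < 1)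
    (hz : ‖lastC z‖ < 1) :
    1 - ‖lastC (ellipsoidAut w a z)‖ ^ 2 - P (initC (ellipsoidAut w a z)) =
      ‖exp (logSqrtDerivDiscAut a (lastC z))‖ ^ 2 * (1 - ‖lastC z‖ ^ 2 - P (initC z)) := by
  rw [lastC_ellipsoidAut, initC_ellipsoidAut, hP, one_sub_norm_discAut_sq ha hz, ← mul_sub]

theorem ellipsoidAut_neg_ellipsoidAut (w : Fin N → ℝ) (ha : ‖a‖ < 1) (hz : ‖lastC z‖ < 1) :
    ellipsoidAut w (-a) (ellipsoidAut w a z) = z := by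
  rw [ellipsoidAut, initC_ellipsoidAut, lastC_ellipsoidAut, discAut_neg_discAut ha hz,
    logSqrtDerivDiscAut_neg_discAut ha hz, weightedDilation_weightedDilation, neg_add_cancel,
    weightedDilation_zero_left, mkPt_initC_lastC]

theorem mapsTo_ellipsoidAut (hPw : IsWeightedHomogeneous w P) (hP : ∀ z', 0 ≤ P z')
    (ha : ‖a‖ < 1) : MapsTo (ellipsoidAut w a) (DP P) (DP P) := by
  intro z hz
  rw [mem_DP_iff, one_sub_ellipsoidAut hPw ha (norm_lastC_lt_one hP hz)]
  exact mul_pos (pow_pos (norm_pos_iff.2 (exp_ne_zero _)) 2) (mem_DP_iff.1 hz)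

theorem bijOn_ellipsoidAut (hPw : IsWeightedHomogeneous w P) (hP : ∀ z', 0 ≤ P z')
    (ha : ‖a‖ < 1) : BijOn (ellipsoidAut w a) (DP P) (DP P) := by
  have ha_neg : ‖-a‖ < 1 := by rwa [norm_neg]
  have hinv : InvOn (ellipsoidAut w (-a)) (ellipsoidAut w a) (DP P) (DP P) := by
    refine ⟨fun z hz => ellipsoidAut_neg_ellipsoidAut w ha (norm_lastC_lt_one hP hz),
      fun z hz => ?_⟩
    simpa only [neg_neg] using
      ellipsoidAut_neg_ellipsoidAut w ha_neg (norm_lastC_lt_one hP hz)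
  exact hinv.bijOn (mapsTo_ellipsoidAut hPw hP ha) (mapsTo_ellipsoidAut hPw hP ha_neg)

theorem differentiableAt_ellipsoidAut (w : Fin N → ℝ) (ha : ‖a‖ < 1) (hz : ‖lastC z‖ < 1) :
    DifferentiableAt ℂ (ellipsoidAut w a) z := by
  refine differentiableAt_mkPt (differentiableAt_pi.2 fun j => ?_) ?_
  · have hlog := (differentiableAt_logSqrtDerivDiscAut ha hz).comp z (differentiable_lastC z)
    exact (hlog.const_mul _).cexp.mul (differentiableAt_pi.1 (differentiable_initC z) j)
  · exact (differentiableAt_discAut ha hz).comp z (differentiable_lastC z)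

/-- The part of the hyperplane `z_n = 0` in the region `P(z') ≤ C (1 - |z_n|² - P(z'))`. -/
def centralSlice (P : (Fin N → ℂ) → ℝ) (C : ℝ) : Set (CSp N) :=
  {z | lastC z = 0 ∧ P (initC z) ≤ C * (1 - P (initC z))}

theorem ellipsoidAut_lastC_mem_centralSlice (hP : IsWeightedHomogeneous w P)
    (hz : ‖lastC z‖ < 1) (hzC : P (initC z) ≤ C * (1 - ‖lastC z‖ ^ 2 - P (initC z))) :
    ellipsoidAut w (lastC z) z ∈ centralSlice P C := by
  have hlast : lastC (ellipsoidAut w (lastC z) z) = 0 := by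
    rw [lastC_ellipsoidAut, discAut, sub_self, zero_div]
  have hone := one_sub_ellipsoidAut hP hz hz
  rw [hlast, norm_zero, zero_pow two_ne_zero, sub_zero] at hone
  refine ⟨hlast, ?_⟩
  rw [hone, initC_ellipsoidAut, hP, mul_left_comm]
  gcongr

theorem centralSlice_subset_DP (hC : 0 ≤ C) : centralSlice P C ⊆ DP P := by
  rintro z ⟨hlast, hzC⟩
  rw [mem_DP_iff, hlast, norm_zero, zero_pow two_ne_zero, sub_zero]
  by_contra! hle
  linarith [mul_nonpos_of_nonneg_of_nonpos hC hle]

theorem isClosed_centralSlice (hP : Continuous P) : IsClosed (centralSlice P C) := by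
  have hPinit : Continuous fun z : CSp N => P (initC z) :=
    hP.comp differentiable_initC.continuous
  exact (isClosed_eq differentiable_lastC.continuous continuous_const).inter
    (isClosed_le hPinit (continuous_const.mul (continuous_const.sub hPinit)))

theorem exists_forall_ball_subset_DP (hP : Continuous P) (hbdd : Bornology.IsBounded (DP P))
    (hC : 0 ≤ C) : ∃ δ > 0, ∀ b ∈ centralSlice P C, ball b δ ⊆ DP P := by
  have hsub : centralSlice P C ⊆ DP P := centralSlice_subset_DP hC
  have hcompact : IsCompact (centralSlice P C) :=
    isCompact_of_isClosed_isBounded (isClosed_centralSlice hP) (hbdd.subset hsub)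
  obtain ⟨δ, hδ, hthick⟩ := hcompact.exists_thickening_subset_open (isOpen_DP hP) hsub
  exact ⟨δ, hδ, fun b hb => (ball_subset_thickening hb δ).trans hthick⟩

end Ellipsoid

section SqueezingFunction

open Filter

variable {n : ℕ} [NeZero n] {Ω : Set (EuclideanSpace ℂ (Fin n))} {p : EuclideanSpace ℂ (Fin n)}

theorem le_one_of_ball_subset_ball {r : ℝ}
    (h : ball (0 : EuclideanSpace ℂ (Fin n)) r ⊆ ball 0 1) : r ≤ 1 := by
  by_contra! hr
  have hmem : EuclideanSpace.single (0 : Fin n) (1 : ℂ) ∈ ball 0 r := by simpa using hr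
  simpa using h hmem

theorem sqf_le_one (Ω : Set (EuclideanSpace ℂ (Fin n))) (p : EuclideanSpace ℂ (Fin n)) :
    sqf Ω p ≤ 1 :=
  Real.sSup_le (fun _ ⟨_, _, _, _, himage, _, hball⟩ =>
    le_one_of_ball_subset_ball (hball.trans himage)) zero_le_one

theorem le_sqf {r : ℝ} {f : EuclideanSpace ℂ (Fin n) → EuclideanSpace ℂ (Fin n)} (hr : 0 < r)
    (hf : DifferentiableOn ℂ f Ω) (hinj : InjOn f Ω) (himage : f '' Ω ⊆ ball 0 1) (hp : f p = 0)
    (hball : ball 0 r ⊆ f '' Ω) : r ≤ sqf Ω p :=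
  le_csSup ⟨1, fun _ ⟨_, _, _, _, himage, _, hball⟩ =>
    le_one_of_ball_subset_ball (hball.trans himage)⟩ ⟨hr, f, hf, hinj, himage, hp, hball⟩

theorem div_le_sqf {δ ρ : ℝ} {f : EuclideanSpace ℂ (Fin n) → EuclideanSpace ℂ (Fin n)}
    (hδ : 0 < δ) (hf : DifferentiableOn ℂ f Ω) (hinj : InjOn f Ω)
    (houter : f '' Ω ⊆ ball (f p) ρ) (hinner : ball (f p) δ ⊆ f '' Ω) : δ / ρ ≤ sqf Ω p := by
  have hρ : 0 < ρ := pos_of_mem_ball (houter (hinner (mem_ball_self hδ)))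
  refine le_sqf (f := fun z => ρ⁻¹ • (f z - f p)) (div_pos hδ hρ)
    ((hf.sub_const _).fun_const_smul _) ?_ ?_ (by simp) ?_
  · intro z hz w hw hzw
    exact hinj hz hw (sub_left_injective (smul_right_injective _ (inv_ne_zero hρ.ne') hzw))
  · rintro _ ⟨z, hz, rfl⟩
    have hfz := mem_ball_iff_norm.1 (houter (mem_image_of_mem f hz))
    rw [mem_ball_zero_iff, norm_smul_of_nonneg (inv_nonneg.2 hρ.le), inv_mul_lt_iff₀ hρ, mul_one]
    exact hfz
  · intro v hv
    obtain ⟨z, hz, hzv⟩ : f p + ρ • v ∈ f '' Ω := by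
      refine hinner ?_
      rw [mem_ball_zero_iff, lt_div_iff₀' hρ] at hv
      rwa [mem_ball_iff_norm, add_sub_cancel_left, norm_smul_of_nonneg hρ.le]
    refine ⟨z, hz, ?_⟩
    simp only [hzv, add_sub_cancel_left, inv_smul_smul₀ hρ.ne']

theorem le_liminf_sqf {c : ℝ} {a : ℕ → EuclideanSpace ℂ (Fin n)} (hc : ∀ j, c ≤ sqf Ω (a j)) :
    c ≤ liminf (fun j => sqf Ω (a j)) atTop := by
  refine le_liminf_of_le ?_ (.of_forall hc)
  exact (isBoundedUnder_of ⟨1, fun j => sqf_le_one Ω (a j)⟩).isCoboundedUnder_ge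

end SqueezingFunction

theorem stmt19_general {w : Fin N → ℝ} (hw : ∀ j, 0 < w j) {P : (Fin N → ℂ) → ℝ}
    (hPc : Continuous P) (hPw : IsWeightedHomogeneous w P) (hPpos : ∀ z', z' ≠ 0 → 0 < P z')
    {C : ℝ} (hC : 0 ≤ C) :
    ∃ c > 0, ∀ p ∈ DP P, P (initC p) ≤ C * (1 - ‖lastC p‖ ^ 2 - P (initC p)) →
      c ≤ sqf (DP P) p := by
  have hP : ∀ z', 0 ≤ P z' := hPw.nonneg hPpos
  have hbdd : Bornology.IsBounded (DP P) :=
    isBounded_DP hP (hPw.isBounded_sublevel hw hPc hPpos)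
  obtain ⟨δ, hδ, hinner⟩ := exists_forall_ball_subset_DP hPc hbdd hC
  obtain ⟨R, hR, hsub⟩ := hbdd.subset_ball_lt 0 0
  refine ⟨δ / (2 * R), by positivity, fun p hp hpC => ?_⟩
  have hpn : ‖lastC p‖ < 1 := norm_lastC_lt_one hP hp
  have hbij := bijOn_ellipsoidAut hPw hP hpn
  have hslice := ellipsoidAut_lastC_mem_centralSlice hPw hpn hpC
  refine div_le_sqf hδ (fun z hz => (differentiableAt_ellipsoidAut w hpn
    (norm_lastC_lt_one hP hz)).differentiableWithinAt) hbij.injOn ?_ ?_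
  · rw [hbij.image_eq]
    intro z hz
    have hz_norm := mem_ball_zero_iff.1 (hsub hz)
    have hp_norm := mem_ball_zero_iff.1 (hsub (hbij.mapsTo hp))
    rw [mem_ball_iff_norm]
    linarith [norm_sub_le z (ellipsoidAut w (lastC p) p)]
  · rw [hbij.image_eq]
    exact hinner _ hslice

/-- Let `θ ∈ ℝ`, `C > 0`, and `{a_j} = {(a_j', a_{jn})}` a sequence in `D_P` with
`a_j → (0', e^{iθ})` and `P(a_j') ≤ C (1 - |a_{jn}|² - P(a_j'))` for all `j`.
Then `liminf_{j→∞} σ_{D_P}(a_j) > 0`. -/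
theorem stmt19 {N : ℕ} (hN : 1 ≤ N) (m : Fin N → ℕ) (hm : ∀ j, 0 < m j)
    (P : (Fin N → ℂ) → ℝ) (hP : IsWHP m P)
    (hPpos : ∀ z' : Fin N → ℂ, z' ≠ 0 → 0 < P z')
    (θ C : ℝ) (hC : 0 < C)
    (a : ℕ → CSp N) (ha : ∀ j, a j ∈ DP P)
    (hconv : Filter.Tendsto a Filter.atTop
      (nhds (EuclideanSpace.single (Fin.last N) (Complex.exp (θ * Complex.I)))))
    (hineq : ∀ j, P (initC (a j)) ≤
      C * (1 - ‖lastC (a j)‖ ^ 2 - P (initC (a j)))) :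
    0 < Filter.liminf (fun j => sqf (DP P) (a j)) Filter.atTop := by
  obtain ⟨c, hc, hle⟩ := stmt19_general (fun j => inv_pos.2 (Nat.cast_pos.2 (hm j))) hP.continuous
    hP.isWeightedHomogeneous hPpos hC.le
  exact hc.trans_le (le_liminf_sqf fun j => hle (a j) (ha j) (hineq j))
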